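/- arXiv:1310.6921 — 9 statements merged into one kernel-verified Lean document; each statement's English description precedes it below -/
import Mathlib

section
/- Let R = (c_1, …, c_r) be a finite family of rankings of Fin n (r ≥ 1). Then the competitivity graph G_c(R) is semi-cohesive; concretely, the labeling of the nodes by their positions in c_1 is a semi-cohesive vertex-set order: whenever a and b compete and c_1⁻¹(a) < c_1⁻¹(x) < c_1⁻¹(b), then a and x compete or x and b compete. -/
/-- `i` precedes `j` in the ranking `c` (i.e. the position of `i` is smaller). -/
def Prec {n : ℕ} (c : Equiv.Perm (Fin n)) (i j : Fin n) : Prop :=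
  c⁻¹ i < c⁻¹ j

/-- Two nodes compete with respect to a family of rankings `c`. -/
def Compete {n r : ℕ} (c : Fin r → Equiv.Perm (Fin n)) (i j : Fin n) : Prop :=
  ∃ s t : Fin r, Prec (c s) i j ∧ Prec (c t) j i

/-- The competitivity graph of a family of rankings. -/
def competitivityGraph {n r : ℕ} (c : Fin r → Equiv.Perm (Fin n)) :
    SimpleGraph (Fin n) where
  Adj i j := Compete c i j
  symm := by
    constructor
    rintro i j ⟨s, t, h1, h2⟩
    exact ⟨t, s, h2, h1⟩
  loopless := by
    constructor
    rintro i ⟨s, t, h1, _⟩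
    exact lt_irrefl _ h1

instance isOrderConnected_invImage {α β : Type*} (r : β → β → Prop) [IsOrderConnected β r]
    (f : α → β) : IsOrderConnected α (InvImage r f) where
  conn a b c := IsOrderConnected.conn (f a) (f b) (f c)

instance Prec.isOrderConnected {n : ℕ} (c : Equiv.Perm (Fin n)) :
    IsOrderConnected (Fin n) (Prec c) :=
  isOrderConnected_invImage (· < ·) ⇑c⁻¹

/-- Two elements compete in a family of relations when two of its members relate them in opposite
directions. This extends `Compete` to families with any index type and to rankings with ties. -/
def RelCompete {ι α : Type*} (r : ι → α → α → Prop) (a b : α) : Prop :=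
  ∃ s t : ι, r s a b ∧ r t b a

theorem competitivityGraph_semiCohesive_general {ι α : Type*} (r : ι → α → α → Prop)
    [∀ i, IsOrderConnected α (r i)] (p : ι) {a b x : α}
    (hab : RelCompete r a b) (hax : r p a x) (hxb : r p x b) :
    RelCompete r a x ∨ RelCompete r x b := by
  obtain ⟨_, t, _, hba⟩ := hab
  rcases IsOrderConnected.conn b x a hba with hbx | hxa
  · exact Or.inr ⟨p, t, hxb, hbx⟩
  · exact Or.inl ⟨p, t, hax, hxa⟩

/-- Every competitivity graph is semi-cohesive: the labeling of the nodes by their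
positions in the first ranking `c_1` is a semi-cohesive vertex-set order. -/
theorem competitivityGraph_semiCohesive {n r : ℕ} (hr : 1 ≤ r)
    (c : Fin r → Equiv.Perm (Fin n)) (a b x : Fin n)
    (hab : (competitivityGraph c).Adj a b)
    (hax : (c ⟨0, hr⟩)⁻¹ a < (c ⟨0, hr⟩)⁻¹ x)
    (hxb : (c ⟨0, hr⟩)⁻¹ x < (c ⟨0, hr⟩)⁻¹ b) :
    (competitivityGraph c).Adj a x ∨ (competitivityGraph c).Adj x b :=
  competitivityGraph_semiCohesive_general (fun i ↦ Prec (c i)) ⟨0, hr⟩ hab hax hxb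
end

section
/- For every n ≥ 5, the cycle graph C_n on n vertices has no semi-cohesive vertex-set order. -/
/-- The cycle graph on `Fin n`: `i` and `j` are adjacent exactly when they are
consecutive modulo `n`. -/
def cycleGraph (n : ℕ) : SimpleGraph (Fin n) where
  Adj i j := i ≠ j ∧ ((i.val + 1) % n = j.val ∨ (j.val + 1) % n = i.val)
  symm := by
    constructor
    rintro i j ⟨h, h'⟩
    exact ⟨h.symm, h'.symm⟩
  loopless := by
    constructor
    rintro i ⟨h, _⟩
    exact h rfl

/-!
Along an induced path `x₀ x₁ x₂ x₃`, semi-cohesiveness turns `e x₁ < e x₃` into `e x₀ < e x₂`: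
if `x₂` came before `x₀`, then `x₀` would lie inside the edge `x₂ x₃`, or else `x₃` inside the
edge `x₁ x₀`. Any four consecutive vertices of an induced cycle of length at least five form such
a path, so from the first vertex `v` of the cycle, `e v < e (v + 2)` propagates backwards to
`e (v - 1) < e (v + 1)` and then to `e (v - 2) < e v`, against the minimality of `v`.
-/

/-- A vertex order `e` of `G` is semi-cohesive if every vertex strictly between the endpoints of
an edge is adjacent to one of them. The order is encoded by positions in a type `α`; injectivity
of `e` is assumed separately where it matters. -/
def IsSemiCohesive {V α : Type*} [LT α] (G : SimpleGraph V) (e : V → α) : Prop :=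
  ∀ a b x : V, G.Adj a b → e a < e x → e x < e b → G.Adj a x ∨ G.Adj x b

namespace IsSemiCohesive

theorem comp_embedding {V W α : Type*} [LT α] {G : SimpleGraph V} {H : SimpleGraph W}
    {e : V → α} (h : IsSemiCohesive G e) (f : H ↪g G) : IsSemiCohesive H (e ∘ f) :=
  fun a b x hab hax hxb ↦
    (h (f a) (f b) (f x) (f.map_adj_iff.mpr hab) hax hxb).imp f.map_adj_iff.mp f.map_adj_iff.mp

theorem pathGraph_four_lt {α : Type*} [LinearOrder α] {e : Fin 4 → α}
    (h : IsSemiCohesive (SimpleGraph.pathGraph 4) e) (he : Function.Injective e)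
    (h13 : e 1 < e 3) : e 0 < e 2 := by
  have adj_10 : (SimpleGraph.pathGraph 4).Adj 1 0 := by simp [SimpleGraph.pathGraph_adj]
  have adj_23 : (SimpleGraph.pathGraph 4).Adj 2 3 := by simp [SimpleGraph.pathGraph_adj]
  have not_adj_13 : ¬ (SimpleGraph.pathGraph 4).Adj 1 3 := by simp [SimpleGraph.pathGraph_adj]
  have not_adj_20 : ¬ (SimpleGraph.pathGraph 4).Adj 2 0 := by simp [SimpleGraph.pathGraph_adj]
  have not_adj_30 : ¬ (SimpleGraph.pathGraph 4).Adj 3 0 := by simp [SimpleGraph.pathGraph_adj]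
  by_contra hlt
  have h20 : e 2 < e 0 := (not_lt.mp hlt).lt_of_ne (he.ne (by decide))
  rcases lt_or_gt_of_ne (he.ne (show (0 : Fin 4) ≠ 3 by decide)) with h03 | h30
  · exact (h 2 3 0 adj_23 h20 h03).elim not_adj_20 (not_adj_30 ·.symm)
  · exact (h 1 0 3 adj_10 h13 h30).elim not_adj_13 not_adj_30

end IsSemiCohesive

theorem cycleGraph_adj_iff {n : ℕ} [NeZero n] {i j : Fin n} :
    (cycleGraph n).Adj i j ↔ i ≠ j ∧ (i + 1 = j ∨ j + 1 = i) := by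
  simp [cycleGraph, Fin.ext_iff, Fin.val_add]

/-- The arc `i, i + 1, …, i + m - 1`, as an induced path of the cycle. The bound
`m < n` is strict because the ends of an arc of `n ≥ 3` vertices are adjacent. -/
def cycleGraphArc {m n : ℕ} [NeZero n] (hmn : m < n) (i : Fin n) :
    SimpleGraph.pathGraph m ↪g cycleGraph n where
  toFun j := i + j.castLE hmn.le
  inj' := (add_right_injective i).comp (Fin.castLE_injective hmn.le)
  map_rel_iff' := by
    intro j k
    have succ_eq_iff (j k : Fin m) :
        i + j.castLE hmn.le + 1 = i + k.castLE hmn.le ↔ j.val + 1 = k.val := by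
      have no_wraparound : (j.castLE hmn.le).val + 1 < n := Nat.lt_of_le_of_lt j.isLt hmn
      rw [add_assoc, add_right_inj, Fin.ext_iff, Fin.val_add_one_of_lt' no_wraparound,
        Fin.val_castLE, Fin.val_castLE]
    change (cycleGraph n).Adj (i + j.castLE hmn.le) (i + k.castLE hmn.le) ↔ _
    rw [cycleGraph_adj_iff, succ_eq_iff, succ_eq_iff, SimpleGraph.pathGraph_adj]
    simp only [ne_eq, add_right_inj, Fin.ext_iff, Fin.val_castLE]
    omega

theorem IsSemiCohesive.cycleGraph_lt_add_two {n : ℕ} [NeZero n] (hn : 5 ≤ n) {α : Type*}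
    [LinearOrder α] {e : Fin n → α} (h : IsSemiCohesive (cycleGraph n) e)
    (he : Function.Injective e) {i : Fin n} (hi : e (i + 1) < e (i + 1 + 2)) :
    e i < e (i + 2) := by
  obtain ⟨k, rfl⟩ := Nat.exists_eq_add_of_le' hn
  let arc := cycleGraphArc hn i
  have arc_zero : arc 0 = i := add_zero i
  have arc_one : arc 1 = i + 1 := rfl
  have arc_two : arc 2 = i + 2 := rfl
  have arc_three : arc 3 = i + 1 + 2 := (add_assoc i 1 2).symm
  have h13 : e (arc 1) < e (arc 3) := by rwa [arc_one, arc_three]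
  have h02 : e (arc 0) < e (arc 2) :=
    (h.comp_embedding arc).pathGraph_four_lt (he.comp arc.injective) h13
  rwa [arc_zero, arc_two] at h02

theorem not_isSemiCohesive_cycleGraph {n : ℕ} (hn : 5 ≤ n) {α : Type*} [LinearOrder α]
    {e : Fin n → α} (he : Function.Injective e) : ¬ IsSemiCohesive (cycleGraph n) e := by
  intro h
  obtain ⟨k, rfl⟩ := Nat.exists_eq_add_of_le' hn
  obtain ⟨v, hv⟩ := Finite.exists_min e
  obtain ⟨i, rfl⟩ : ∃ i, i + 2 = v := ⟨v - 2, sub_add_cancel v 2⟩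
  have two_ne_zero : (2 : Fin (k + 5)) ≠ 0 := by
    simp [Fin.ext_iff, Nat.mod_eq_of_lt (show 2 < k + 5 by omega)]
  have add_one_add_one : i + 1 + 1 = i + 2 := add_assoc i 1 1
  have h_last : e (i + 1 + 1) < e (i + 1 + 1 + 2) := by
    rw [add_one_add_one]
    exact (hv _).lt_of_ne (he.ne (left_ne_add.mpr two_ne_zero))
  have h_mid : e (i + 1) < e (i + 1 + 2) := h.cycleGraph_lt_add_two hn he h_last
  have h_first : e i < e (i + 2) := h.cycleGraph_lt_add_two hn he h_mid
  exact (hv i).not_gt h_first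

theorem cycleGraph_not_semiCohesive_general {n : ℕ} (hn : 5 ≤ n) {V α : Type*} [LinearOrder α]
    {G : SimpleGraph V} (f : cycleGraph n ↪g G) {e : V → α} (he : Function.Injective e) :
    ¬ IsSemiCohesive G e :=
  fun h ↦ not_isSemiCohesive_cycleGraph hn (he.comp f.injective) (h.comp_embedding f)

/-- For every `n ≥ 5`, the cycle graph `C_n` has no semi-cohesive vertex-set order. -/
theorem cycleGraph_not_semiCohesive (n : ℕ) (hn : 5 ≤ n) :
    ¬ ∃ e : Fin n ≃ Fin n, ∀ a b x : Fin n,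
        (cycleGraph n).Adj a b → e a < e x → e x < e b →
        (cycleGraph n).Adj a x ∨ (cycleGraph n).Adj x b := by
  rintro ⟨e, he⟩
  exact cycleGraph_not_semiCohesive_general hn SimpleGraph.Embedding.refl e.injective he
end

section
/- For every n ≥ 5, the cycle graph C_n is not a competitivity graph: there is no finite family of rankings R = (c_1, …, c_r) of Fin n whose competitivity graph G_c(R) is isomorphic to C_n. -/
/-!
Unanimous precedence is the product order on the vectors of positions, so a competitivity graph is
the incomparability graph of a preorder, and it suffices that no such graph contains an induced
cycle `x 0, x 1, …` of length `n ≥ 5`. Along an induced path `a, b, c, d` of incomparabilities the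
comparable pairs `ac`, `ad`, `bd` must all point the same way, since otherwise transitivity would
compare two consecutive elements. Hence if `x 0 ≤ x 2`, then `x k ≤ x (k + 2)` for every `k`, and
going round the cycle twice leads from `x 2` back to `x 0`. As `x 0 ≤ x 3`, the consecutive elements
`x 2` and `x 3` become comparable. The case `x 2 ≤ x 0` is dual.
-/

/-- The incomparability graph of a preorder: competitivity graphs are pulled back from it along
position vectors. Equivalent elements count as comparable. -/
def incompGraph (α : Type*) [Preorder α] : SimpleGraph α where
  Adj := IncompRel (· ≤ ·)
  symm := ⟨fun _ _ => IncompRel.symm⟩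
  loopless := ⟨fun _ h => h.ne rfl⟩

section Preorder

variable {α : Type*} [Preorder α]

theorem le_and_le_of_le_of_symmGen {a b c d : α} (hab : ¬ a ≤ b) (hdc : ¬ d ≤ c)
    (had : Relation.SymmGen (· ≤ ·) a d) (hbd : Relation.SymmGen (· ≤ ·) b d) (hac : a ≤ c) :
    a ≤ d ∧ b ≤ d := by
  have a_le_d : a ≤ d := had.resolve_right fun d_le_a => hdc (d_le_a.trans hac)
  exact ⟨a_le_d, hbd.resolve_right fun d_le_b => hab (a_le_d.trans d_le_b)⟩

variable {x : ℕ → α}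

theorem not_periodic_of_incompGraph_adj_iff_of_le
    (hx : ∀ k, ∀ d ≤ 3, (incompGraph α).Adj (x k) (x (k + d)) ↔ d = 1) (h02 : x 0 ≤ x 2)
    {n : ℕ} (hn : n ≠ 0) : ¬ Function.Periodic x n := by
  intro periodic
  have incomp (k : ℕ) : IncompRel (· ≤ ·) (x k) (x (k + 1)) := (hx k 1 (by decide)).2 rfl
  have comp_two (k : ℕ) : Relation.SymmGen (· ≤ ·) (x k) (x (k + 2)) :=
    not_incompRel_iff_symmGen.1 (mt (hx k 2 (by decide)).1 (by decide))
  have comp_three (k : ℕ) : Relation.SymmGen (· ≤ ·) (x k) (x (k + 3)) :=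
    not_incompRel_iff_symmGen.1 (mt (hx k 3 (by decide)).1 (by decide))
  have forcing (k : ℕ) : x k ≤ x (k + 2) → x k ≤ x (k + 3) ∧ x (k + 1) ≤ x (k + 3) :=
    le_and_le_of_le_of_symmGen (incomp k).not_le (incomp (k + 2)).not_ge
      (comp_three k) (comp_two (k + 1))
  have le_add_two (k : ℕ) : x k ≤ x (k + 2) := by
    induction k with
    | zero => exact h02
    | succ k ih => exact (forcing k ih).2
  have even_monotone : Monotone fun m => x (2 * m) :=
    monotone_nat_of_le_succ fun m => le_add_two (2 * m)
  refine (incomp 2).not_le ?_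
  calc x 2 ≤ x (2 * n) := even_monotone (Nat.one_le_iff_ne_zero.2 hn)
    _ = x 0 := periodic.nat_mul_eq 2
    _ ≤ x 3 := (forcing 0 h02).1

theorem not_periodic_of_incompGraph_adj_iff
    (hx : ∀ k, ∀ d ≤ 3, (incompGraph α).Adj (x k) (x (k + d)) ↔ d = 1)
    {n : ℕ} (hn : n ≠ 0) : ¬ Function.Periodic x n := by
  have comp : Relation.SymmGen (· ≤ ·) (x 0) (x 2) :=
    not_incompRel_iff_symmGen.1 (mt (hx 0 2 (by decide)).1 (by decide))
  rcases comp with h02 | h20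
  · exact not_periodic_of_incompGraph_adj_iff_of_le hx h02 hn
  · have hx_dual (k d : ℕ) (hd : d ≤ 3) :
        (incompGraph αᵒᵈ).Adj (OrderDual.toDual (x k)) (OrderDual.toDual (x (k + d))) ↔ d = 1 :=
      incompRel_comm.trans (hx k d hd)
    exact fun periodic => not_periodic_of_incompGraph_adj_iff_of_le hx_dual h20 hn
      (periodic.comp OrderDual.toDual)

end Preorder

theorem cycleGraph_adj_ofNat_add {n : ℕ} [NeZero n] {k d : ℕ} (hd : d + 1 < n) :
    (cycleGraph n).Adj (Fin.ofNat n k) (Fin.ofNat n (k + d)) ↔ d = 1 := by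
  have eq_iff : Fin.ofNat n k = Fin.ofNat n (k + d) ↔ d = 0 := by
    rw [Fin.ext_iff]
    exact Nat.left_modEq_add_iff.trans
      ⟨fun h => Nat.eq_zero_of_dvd_of_lt h (by omega), fun h => h ▸ dvd_zero n⟩
  have succ_iff : (k % n + 1) % n = (k + d) % n ↔ 1 = d := by
    rw [Nat.mod_add_mod]
    exact (Nat.ModEq.add_iff_left rfl).trans
      ⟨fun h => h.eq_of_lt_of_lt (by omega) (by omega), fun h => h ▸ rfl⟩
  have pred_ne : ((k + d) % n + 1) % n ≠ k % n := by
    rw [Nat.mod_add_mod, add_assoc]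
    exact fun h => Nat.not_dvd_of_pos_of_lt d.succ_pos hd (Nat.left_modEq_add_iff.1 h.symm)
  simp only [cycleGraph, Fin.val_ofNat, ne_eq, eq_iff, succ_iff, pred_ne, or_false]
  omega

theorem comap_incompGraph_ne_cycleGraph {α : Type*} [Preorder α] {n : ℕ} (hn : 5 ≤ n)
    (f : Fin n → α) : (incompGraph α).comap f ≠ cycleGraph n := by
  intro h
  have : NeZero n := ⟨by omega⟩
  have periodic : Function.Periodic (fun k => f (Fin.ofNat n k)) n := fun k =>
    congrArg f (Fin.ext (Nat.add_mod_right k n))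
  refine not_periodic_of_incompGraph_adj_iff (fun k d hd => ?_) (NeZero.ne n) periodic
  rw [← SimpleGraph.comap_adj, h]
  exact cycleGraph_adj_ofNat_add (by omega)

/-- The position vector of `i`, listing its position in each ranking of the family `c`: under the
product order, `i` lies below `j` when no ranking places `j` strictly before `i`. -/
def positions {n r : ℕ} (c : Fin r → Equiv.Perm (Fin n)) (i : Fin n) : Fin r → Fin n :=
  fun s => (c s)⁻¹ i

theorem competitivityGraph_eq_comap_positions {n r : ℕ} (c : Fin r → Equiv.Perm (Fin n)) :
    competitivityGraph c = (incompGraph (Fin r → Fin n)).comap (positions c) := by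
  ext i j
  simp only [SimpleGraph.comap_adj, incompGraph, IncompRel, Pi.le_def, not_forall, not_le]
  exact ⟨fun ⟨s, t, hs, ht⟩ => ⟨⟨t, ht⟩, ⟨s, hs⟩⟩, fun ⟨⟨t, ht⟩, ⟨s, hs⟩⟩ => ⟨s, t, hs, ht⟩⟩

theorem cycleGraph_not_competitivity_general {m n r : ℕ} (hn : 5 ≤ n)
    (c : Fin r → Equiv.Perm (Fin m)) : IsEmpty (cycleGraph n ↪g competitivityGraph c) := by
  refine ⟨fun φ => comap_incompGraph_ne_cycleGraph hn (positions c ∘ φ) ?_⟩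
  rw [← SimpleGraph.comap_comap, ← competitivityGraph_eq_comap_positions, φ.comap_eq]

/-- For every `n ≥ 5`, the cycle graph `C_n` is not a competitivity graph: no family of
rankings of `Fin n` has a competitivity graph isomorphic to `C_n`. -/
theorem cycleGraph_not_competitivity (n : ℕ) (hn : 5 ≤ n) :
    ¬ ∃ (r : ℕ) (c : Fin r → Equiv.Perm (Fin n)),
        Nonempty (competitivityGraph c ≃g cycleGraph n) := by
  rintro ⟨r, c, ⟨e⟩⟩
  exact (cycleGraph_not_competitivity_general hn c).false e.symm.toEmbedding
end

section
/- For every n ≥ 2, the odd cycle graph C_{2n+1} on 2n+1 vertices is not a comparability graph: it admits no transitive orientation of its edges. -/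
/-- `r` is a transitive orientation of the edges of `G`. -/
def TransOrientation {V : Type*} (G : SimpleGraph V) (r : V → V → Prop) : Prop :=
  (∀ i j, G.Adj i j ↔ (r i j ∨ r j i)) ∧ (∀ i j, r i j → ¬ r j i) ∧ Transitive r

/-!
If `u, v, w` is a path whose ends are not adjacent, transitivity forbids both `u → v → w` and
`w → v → u`, so in a transitive orientation `v` is a source or a sink of the path. Along a closed
walk in which vertices two steps apart are never adjacent, the edges therefore alternate in
direction, so the walk has even length. A cycle of length at least four is such a walk.
-/

theorem even_of_alternating {p : ℕ → Prop} (hp : ∀ k, p (k + 1) ↔ ¬ p k) {m : ℕ}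
    (hm : p m ↔ p 0) : Even m := by
  have parity : ∀ k, (p k ↔ p 0) ↔ Even k := by
    intro k
    induction k with
    | zero => simp
    | succ k ih => rw [hp, Nat.even_add_one, ← ih, not_iff]
  exact (parity m).mp hm

namespace TransOrientation

variable {V : Type*} {G : SimpleGraph V} {r : V → V → Prop}

theorem rel_iff_not_rel_of_not_adj (h : TransOrientation G r) {u v w : V} (huv : G.Adj u v)
    (hvw : G.Adj v w) (huw : ¬ G.Adj u w) : r v w ↔ ¬ r u v := by
  obtain ⟨adj_iff, -, trans⟩ := h
  constructor
  · intro rvw ruv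
    exact huw ((adj_iff u w).mpr (.inl (trans ruv rvw)))
  · intro not_ruv
    have rvu : r v u := ((adj_iff u v).mp huv).resolve_left not_ruv
    refine ((adj_iff v w).mp hvw).resolve_right fun rwv => ?_
    exact huw ((adj_iff u w).mpr (.inr (trans rwv rvu)))

/-- The necessity half of the Gilmore–Hoffman characterization of comparability graphs. -/
theorem even_of_periodic (h : TransOrientation G r) {v : ℕ → V} {m : ℕ}
    (hv : Function.Periodic v m) (hadj : ∀ k, G.Adj (v k) (v (k + 1)))
    (hchord : ∀ k, ¬ G.Adj (v k) (v (k + 2))) : Even m := by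
  have alternating : ∀ k, r (v (k + 1)) (v (k + 2)) ↔ ¬ r (v k) (v (k + 1)) := fun k =>
    h.rel_iff_not_rel_of_not_adj (hadj k) (hadj (k + 1)) (hchord k)
  have closed : r (v m) (v (m + 1)) ↔ r (v 0) (v 1) := by
    rw [hv.eq, add_comm m 1, hv 1]
  exact even_of_alternating (p := fun k => r (v k) (v (k + 1))) alternating closed

end TransOrientation

namespace cycleGraph

variable {m : ℕ} [NeZero m]

theorem adj_ofNat_iff {a b : ℕ} :
    (cycleGraph m).Adj (Fin.ofNat m a) (Fin.ofNat m b) ↔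
      ¬ a ≡ b [MOD m] ∧ (a + 1 ≡ b [MOD m] ∨ b + 1 ≡ a [MOD m]) := by
  simp [cycleGraph, Nat.ModEq, Fin.ext_iff]

theorem adj_ofNat_succ (hm : m ≠ 1) (k : ℕ) :
    (cycleGraph m).Adj (Fin.ofNat m k) (Fin.ofNat m (k + 1)) := by
  refine adj_ofNat_iff.mpr ⟨fun hk => hm ?_, .inl rfl⟩
  simpa using (Nat.modEq_iff_dvd' (by lia)).mp hk

theorem not_adj_ofNat_add_two (hm : m ≠ 3) (k : ℕ) :
    ¬ (cycleGraph m).Adj (Fin.ofNat m k) (Fin.ofNat m (k + 2)) := by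
  rw [adj_ofNat_iff]
  rintro ⟨hne, hsucc | hpred⟩
  · have : m ∣ 1 := by simpa using (Nat.modEq_iff_dvd' (by lia)).mp hsucc
    obtain rfl : m = 1 := Nat.dvd_one.mp this
    exact hne Nat.modEq_one
  · have : m ∣ 3 := by simpa [add_assoc] using (Nat.modEq_iff_dvd' (by lia)).mp hpred.symm
    obtain rfl : m = 1 := ((Nat.dvd_prime Nat.prime_three).mp this).resolve_right hm
    exact hne Nat.modEq_one

theorem periodic_ofNat : Function.Periodic (Fin.ofNat m) m := fun k => by
  simp [Fin.ext_iff]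

end cycleGraph

/-- For every `n ≥ 2`, the odd cycle `C_{2n+1}` is not a comparability graph: it admits
no transitive orientation of its edges. -/
theorem oddCycle_not_comparability (n : ℕ) (hn : 2 ≤ n) :
    ¬ ∃ r : Fin (2 * n + 1) → Fin (2 * n + 1) → Prop,
        TransOrientation (cycleGraph (2 * n + 1)) r := by
  rintro ⟨r, hr⟩
  have even_length : Even (2 * n + 1) :=
    hr.even_of_periodic cycleGraph.periodic_ofNat (cycleGraph.adj_ofNat_succ (by lia))
      (cycleGraph.not_adj_ofNat_add_two (by lia))
  exact Nat.not_even_two_mul_add_one n even_length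
end

section
/- A finite simple graph G is a permutation graph if and only if G is both a competitivity graph and a comparability graph. -/
/-- The permutation graph of a permutation `π` of `Fin n`: distinct `i` and `j` are
adjacent exactly when `(i, j)` is an inversion of `π`. -/
def permGraph {n : ℕ} (π : Equiv.Perm (Fin n)) : SimpleGraph (Fin n) where
  Adj i j := (i < j ∧ π⁻¹ j < π⁻¹ i) ∨ (j < i ∧ π⁻¹ i < π⁻¹ j)
  symm := by
    constructor
    rintro i j (⟨h1, h2⟩ | ⟨h1, h2⟩)
    · exact Or.inr ⟨h1, h2⟩
    · exact Or.inl ⟨h1, h2⟩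
  loopless := by
    constructor
    rintro i (⟨h1, _⟩ | ⟨h1, _⟩) <;> exact lt_irrefl _ h1

/-- `G` is a permutation graph if it is isomorphic to the permutation graph of some
permutation of some `Fin n`. -/
def IsPermutationGraph {V : Type*} (G : SimpleGraph V) : Prop :=
  ∃ (n : ℕ) (π : Equiv.Perm (Fin n)), Nonempty (G ≃g permGraph π)

/-- `G` is a competitivity graph if it is isomorphic to the competitivity graph of some
family of rankings. -/
def IsCompetitivityGraph {V : Type*} (G : SimpleGraph V) : Prop :=
  ∃ (n r : ℕ) (c : Fin r → Equiv.Perm (Fin n)), Nonempty (G ≃g competitivityGraph c)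

/-- `G` is a comparability graph if it admits a transitive orientation of its edges. -/
def IsComparabilityGraph {V : Type*} (G : SimpleGraph V) : Prop :=
  ∃ r : V → V → Prop, TransOrientation G r

/-!
The pairs on which a nonempty family of rankings is unanimous are transitively oriented by their
common order, so the complement of a competitivity graph is a comparability graph. Given transitive
orientations `r` of `G` and `q` of `Gᶜ`, both `r ∪ q` and `r⁻¹ ∪ q` are linear orders, where `r⁻¹`
is the reverse of `r`, and they disagree exactly on the edges of `G`.
-/

section

variable {V : Type*}

namespace TransOrientation

variable {G : SimpleGraph V} {r q : V → V → Prop} {a b c : V}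

theorem adj (hr : TransOrientation G r) (hab : r a b) : G.Adj a b :=
  (hr.1 a b).2 (.inl hab)

theorem swap (hr : TransOrientation G r) : TransOrientation G (Function.swap r) :=
  ⟨fun a b ↦ (hr.1 a b).trans or_comm, fun a b ↦ hr.2.1 b a, fun _ _ _ hba hcb ↦ hr.2.2 hcb hba⟩

theorem rel_or_rel_of_rel_of_rel_compl (hr : TransOrientation G r) (hq : TransOrientation Gᶜ q)
    (hab : r a b) (hbc : q b c) : r a c ∨ q a c := by
  have hac : a ≠ c := by
    rintro rfl
    exact (hq.adj hbc).2 (hr.adj hab).symm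
  by_cases h : G.Adj a c
  · exact .inl <| ((hr.1 a c).1 h).resolve_right fun hca ↦
      (hq.adj hbc).2 (hr.adj (hr.2.2 hca hab)).symm
  · exact .inr <| ((hq.1 a c).1 ⟨hac, h⟩).resolve_right fun hca ↦
      (hq.adj (hq.2.2 hbc hca)).2 (hr.adj hab).symm

theorem isStrictTotalOrder_sup (hr : TransOrientation G r) (hq : TransOrientation Gᶜ q) :
    IsStrictTotalOrder V (r ⊔ q) where
  trichotomous a b hab hba := by
    by_contra hne
    by_cases h : G.Adj a b
    · exact ((hr.1 a b).1 h).elim (hab ∘ .inl) (hba ∘ .inl)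
    · exact ((hq.1 a b).1 ⟨hne, h⟩).elim (hab ∘ .inr) (hba ∘ .inr)
  irrefl a := by
    rintro (h | h)
    exacts [(hr.adj h).ne rfl, (hq.adj h).ne rfl]
  trans a b c := by
    have hr' : TransOrientation Gᶜᶜ r := by rwa [compl_compl]
    rintro (hab | hab) (hbc | hbc)
    · exact .inl (hr.2.2 hab hbc)
    · exact hr.rel_or_rel_of_rel_of_rel_compl hq hab hbc
    · exact (hq.rel_or_rel_of_rel_of_rel_compl hr' hab hbc).symm
    · exact .inr (hq.2.2 hab hbc)

end TransOrientation

/-- The graph joining two elements when some two orders in `S` rank them in opposite ways: the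
competitivity graph of an arbitrary set of linear orders on an arbitrary vertex type. -/
def disagreementGraph (S : Set (LinearOrder V)) : SimpleGraph V where
  Adj a b := ∃ L₁ ∈ S, ∃ L₂ ∈ S, L₁.lt a b ∧ L₂.lt b a
  symm := ⟨fun _ _ ⟨L₁, hL₁, L₂, hL₂, hab, hba⟩ ↦ ⟨L₂, hL₂, L₁, hL₁, hba, hab⟩⟩
  loopless := ⟨fun a ⟨L, _, _, _, h, _⟩ ↦ @lt_irrefl _ L.toPreorder a h⟩

theorem disagreementGraph_eq_bot_of_subsingleton {S : Set (LinearOrder V)} (hS : S.Subsingleton) :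
    disagreementGraph S = ⊥ := by
  rw [SimpleGraph.eq_bot_iff_forall_not_adj]
  rintro a b ⟨L₁, hL₁, L₂, hL₂, hab, hba⟩
  obtain rfl := hS hL₁ hL₂
  exact @lt_asymm _ L₁.toPreorder a b hab hba

theorem disagreementGraph_pair_adj {L₁ L₂ : LinearOrder V} {a b : V} :
    (disagreementGraph {L₁, L₂}).Adj a b ↔
      (L₁.lt a b ∧ L₂.lt b a) ∨ (L₁.lt b a ∧ L₂.lt a b) := by
  have h₁ : L₁.lt a b → ¬ L₁.lt b a := @lt_asymm _ L₁.toPreorder a b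
  have h₂ : L₂.lt a b → ¬ L₂.lt b a := @lt_asymm _ L₂.toPreorder a b
  simp only [disagreementGraph, Set.mem_insert_iff, Set.mem_singleton_iff, exists_eq_or_imp,
    exists_eq_left]
  tauto

theorem transOrientation_disagreementGraph_pair (L₁ L₂ : LinearOrder V) :
    TransOrientation (disagreementGraph {L₁, L₂}) fun a b ↦ L₁.lt a b ∧ L₂.lt b a := by
  refine ⟨fun a b ↦ ?_, fun a b hab hba ↦ ?_, fun a b c hab hbc ↦ ⟨?_, ?_⟩⟩
  · exact disagreementGraph_pair_adj
  · exact @lt_asymm _ L₁.toPreorder a b hab.1 hba.1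
  · exact @lt_trans _ L₁.toPreorder a b c hab.1 hbc.1
  · exact @lt_trans _ L₂.toPreorder c b a hbc.2 hab.2

theorem transOrientation_compl_disagreementGraph {S : Set (LinearOrder V)} (hS : S.Nonempty) :
    TransOrientation (disagreementGraph S)ᶜ fun a b ↦ ∀ L ∈ S, L.lt a b := by
  obtain ⟨L₀, hL₀⟩ := hS
  have asymm (L : LinearOrder V) {a b : V} : L.lt a b → ¬ L.lt b a := @lt_asymm _ L.toPreorder a b
  have total (L : LinearOrder V) {a b : V} (hne : a ≠ b) (h : ¬ L.lt a b) : L.lt b a :=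
    (@lt_or_gt_of_ne _ L a b hne).resolve_left h
  refine ⟨fun a b ↦ ⟨fun ⟨hne, hab⟩ ↦ ?_, ?_⟩, fun a b hab hba ↦ asymm L₀ (hab L₀ hL₀) (hba L₀ hL₀),
    fun a b c hab hbc L hL ↦ @lt_trans _ L.toPreorder a b c (hab L hL) (hbc L hL)⟩
  · by_contra h
    simp only [not_or, not_forall] at h
    obtain ⟨⟨L₁, hL₁, h₁⟩, L₂, hL₂, h₂⟩ := h
    exact hab ⟨L₂, hL₂, L₁, hL₁, total L₂ hne.symm h₂, total L₁ hne h₁⟩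
  · rintro (h | h) <;> refine ⟨?_, fun ⟨L₁, hL₁, L₂, hL₂, hab, hba⟩ ↦ ?_⟩
    · exact @ne_of_lt _ L₀.toPreorder a b (h L₀ hL₀)
    · exact asymm L₂ (h L₂ hL₂) hba
    · exact (@ne_of_lt _ L₀.toPreorder b a (h L₀ hL₀)).symm
    · exact asymm L₁ (h L₁ hL₁) hab

theorem isComparabilityGraph_compl_disagreementGraph (S : Set (LinearOrder V)) :
    IsComparabilityGraph (disagreementGraph S)ᶜ := by
  obtain rfl | hS := S.eq_empty_or_nonempty
  · obtain ⟨L, -⟩ := exists_wellFoundedLT V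
    rw [disagreementGraph_eq_bot_of_subsingleton Set.subsingleton_empty,
      ← disagreementGraph_eq_bot_of_subsingleton (Set.subsingleton_singleton (a := L))]
    exact ⟨_, transOrientation_compl_disagreementGraph (Set.singleton_nonempty L)⟩
  · exact ⟨_, transOrientation_compl_disagreementGraph hS⟩

theorem exists_linearOrder_lt_eq (r : V → V → Prop) [IsStrictTotalOrder V r] :
    ∃ L : LinearOrder V, L.lt = r := by
  classical exact ⟨linearOrderOfSTO r, rfl⟩

theorem IsComparabilityGraph.exists_eq_disagreementGraph_pair {G : SimpleGraph V}
    (hG : IsComparabilityGraph G) (hG' : IsComparabilityGraph Gᶜ) :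
    ∃ L₁ L₂ : LinearOrder V, G = disagreementGraph {L₁, L₂} := by
  obtain ⟨r, hr⟩ := hG
  obtain ⟨q, hq⟩ := hG'
  have := hr.isStrictTotalOrder_sup hq
  have := hr.swap.isStrictTotalOrder_sup hq
  obtain ⟨L₁, h₁⟩ := exists_linearOrder_lt_eq (r ⊔ q)
  obtain ⟨L₂, h₂⟩ := exists_linearOrder_lt_eq (Function.swap r ⊔ q)
  refine ⟨L₁, L₂, ?_⟩
  ext a b
  have hq_asymm := hq.2.1 a b
  simp only [disagreementGraph_pair_adj, h₁, h₂, hr.1 a b, Pi.sup_apply, sup_Prop_eq,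
    Function.swap]
  tauto

/-- On an infinite vertex type, a pair of linear orders takes the place of a permutation. -/
theorem isPermutationGraph_iff_general (G : SimpleGraph V) :
    (∃ L₁ L₂ : LinearOrder V, G = disagreementGraph {L₁, L₂}) ↔
      (∃ S : Set (LinearOrder V), G = disagreementGraph S) ∧ IsComparabilityGraph G := by
  constructor
  · rintro ⟨L₁, L₂, rfl⟩
    exact ⟨⟨_, rfl⟩, _, transOrientation_disagreementGraph_pair L₁ L₂⟩
  · rintro ⟨⟨S, rfl⟩, hG⟩
    exact hG.exists_eq_disagreementGraph_pair (isComparabilityGraph_compl_disagreementGraph S)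

/-- The linear order on `V` in which `e v` is the position of `v`. -/
abbrev positionOrder {n : ℕ} (e : V ≃ Fin n) : LinearOrder V :=
  LinearOrder.lift' e e.injective

theorem exists_positionOrder_eq [Finite V] (L : LinearOrder V) :
    ∃ e : V ≃ Fin (Nat.card V), positionOrder e = L := by
  have := Fintype.ofFinite V
  let e := (Fintype.orderIsoFinOfCardEq V Nat.card_eq_fintype_card.symm).symm
  exact ⟨e.toEquiv, LinearOrder.ext_lt fun _ _ ↦ e.lt_iff_lt⟩

theorem comap_permGraph {n : ℕ} (e : V ≃ Fin n) (π : Equiv.Perm (Fin n)) :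
    (permGraph π).comap e = disagreementGraph {positionOrder e, positionOrder (e.trans π⁻¹)} := by
  ext a b
  rw [disagreementGraph_pair_adj]
  rfl

theorem comap_competitivityGraph {n r : ℕ} (e : V ≃ Fin n) (c : Fin r → Equiv.Perm (Fin n)) :
    (competitivityGraph c).comap e =
      disagreementGraph (Set.range fun s ↦ positionOrder (e.trans (c s)⁻¹)) := by
  ext a b
  simp only [disagreementGraph, Set.exists_range_iff]
  exact ⟨fun ⟨s, t, h⟩ ↦ ⟨s, t, h⟩, fun ⟨s, t, h⟩ ↦ ⟨s, t, h⟩⟩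

theorem isPermutationGraph_iff_exists_linearOrder [Finite V] {G : SimpleGraph V} :
    IsPermutationGraph G ↔ ∃ L₁ L₂ : LinearOrder V, G = disagreementGraph {L₁, L₂} := by
  constructor
  · rintro ⟨n, π, ⟨f⟩⟩
    exact ⟨_, _, f.toEmbedding.comap_eq.symm.trans (comap_permGraph f.toEquiv π)⟩
  · rintro ⟨L₁, L₂, rfl⟩
    obtain ⟨e₁, rfl⟩ := exists_positionOrder_eq L₁
    obtain ⟨e₂, rfl⟩ := exists_positionOrder_eq L₂
    let π : Equiv.Perm (Fin (Nat.card V)) := e₂.symm.trans e₁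
    have hπ : e₁.trans π⁻¹ = e₂ := by ext; simp [π, Equiv.Perm.inv_def]
    refine ⟨_, π, ⟨?_⟩⟩
    rw [← hπ, ← comap_permGraph]
    exact .comap e₁ _

theorem isCompetitivityGraph_iff_exists_set_linearOrder [Finite V] {G : SimpleGraph V} :
    IsCompetitivityGraph G ↔ ∃ S : Set (LinearOrder V), G = disagreementGraph S := by
  constructor
  · rintro ⟨n, r, c, ⟨f⟩⟩
    exact ⟨_, f.toEmbedding.comap_eq.symm.trans (comap_competitivityGraph f.toEquiv c)⟩
  · rintro ⟨S, rfl⟩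
    choose e he using exists_positionOrder_eq (V := V)
    have : Finite (LinearOrder V) := .of_injective e (Function.LeftInverse.injective he)
    obtain ⟨r, L, -, rfl⟩ := S.toFinite.fin_param
    let e₀ := Finite.equivFin V
    let c (s : Fin r) : Equiv.Perm (Fin (Nat.card V)) := (e (L s)).symm.trans e₀
    have hc : (fun s ↦ positionOrder (e₀.trans (c s)⁻¹)) = L := by
      funext s
      rw [← he (L s)]
      congr 1
      ext; simp [c, Equiv.Perm.inv_def]
    refine ⟨_, r, c, ⟨?_⟩⟩
    rw [← hc, ← comap_competitivityGraph]
    exact .comap e₀ _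

end

/-- A finite simple graph is a permutation graph iff it is both a competitivity graph
and a comparability graph. -/
theorem isPermutationGraph_iff {V : Type*} [Fintype V] (G : SimpleGraph V) :
    IsPermutationGraph G ↔ IsCompetitivityGraph G ∧ IsComparabilityGraph G := by
  rw [isPermutationGraph_iff_exists_linearOrder, isCompetitivityGraph_iff_exists_set_linearOrder]
  exact isPermutationGraph_iff_general G
end

section
/- Let R = (c_1, …, c_r) be a finite family of rankings of Fin n and let D be a set of eventual competitors (a connected component of the competitivity graph G_c(R)). If some a ∈ D occupies the first position of some ranking c_m ∈ R (i.e., c_m⁻¹(a) is the minimal position), then every element x ∈ Fin n that occupies the first position of some ranking c_s ∈ R belongs to D. -/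
theorem prec_of_le_of_ne {n : ℕ} {c : Equiv.Perm (Fin n)} {i j : Fin n}
    (hle : c⁻¹ i ≤ c⁻¹ j) (hne : i ≠ j) : Prec c i j :=
  hle.lt_of_ne (c⁻¹.injective.ne hne)

theorem reachable_competitivityGraph_of_le_of_le {n r : ℕ} {c : Fin r → Equiv.Perm (Fin n)}
    {s t : Fin r} {i j : Fin n} (hij : (c s)⁻¹ i ≤ (c s)⁻¹ j) (hji : (c t)⁻¹ j ≤ (c t)⁻¹ i) :
    (competitivityGraph c).Reachable i j := by
  obtain rfl | hne := eq_or_ne i j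
  · exact .rfl
  · have hadj : (competitivityGraph c).Adj i j :=
      ⟨s, t, prec_of_le_of_ne hij hne, prec_of_le_of_ne hji hne.symm⟩
    exact hadj.reachable

/-- If a connected component `D` of the competitivity graph contains an element that
occupies the first position of some ranking, then every element occupying the first
position of some ranking belongs to `D`. -/
theorem firstPositions_subset_component {n r : ℕ} (c : Fin r → Equiv.Perm (Fin n))
    (D : (competitivityGraph c).ConnectedComponent) (a : Fin n) (ha : a ∈ D.supp)
    (m : Fin r) (hm : ((c m)⁻¹ a).val = 0) :
    ∀ x : Fin n, (∃ s : Fin r, ((c s)⁻¹ x).val = 0) → x ∈ D.supp := by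
  rintro x ⟨s, hs⟩
  have hxa : (c s)⁻¹ x ≤ (c s)⁻¹ a := hs.le.trans (Nat.zero_le _)
  have hax : (c m)⁻¹ a ≤ (c m)⁻¹ x := hm.le.trans (Nat.zero_le _)
  have hreach : (competitivityGraph c).Reachable x a :=
    reachable_competitivityGraph_of_le_of_le hxa hax
  rw [SimpleGraph.ConnectedComponent.mem_supp_iff] at ha ⊢
  exact (SimpleGraph.ConnectedComponent.sound hreach).trans ha
end

section
/- Let R = (c_1, …, c_r) be a finite family of rankings of Fin n (n ≥ 1, r ≥ 1). For every set of eventual competitors D (connected component of the competitivity graph G_c(R)) there exist positions p ≤ q in Fin n such that D = {x ∈ Fin n : ∃ s, p ≤ c_s⁻¹(x) ≤ q}; moreover p is the minimum and q is the maximum of the positions c_s⁻¹(x) taken over all x ∈ D and all rankings c_s ∈ R. -/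
/-! An element outside a component `D` competes with no element of `D`, hence is ranked the same way
against each of them by all rankings; walking along the edges of `D` shows that it is then on the
same side of the whole of `D`. So every ranking lists first the predecessors of `D`, then `D`, then
the rest. Initial segments of a finite chain are determined by their size, so the block occupied by
`D` is the same in all rankings. -/

theorem isLowerSet_eq_of_encard_eq {α : Type*} [LinearOrder α] {A B : Set α}
    (hA : IsLowerSet A) (hB : IsLowerSet B) (hfin : A.Finite) (hcard : A.encard = B.encard) :
    A = B := by
  rcases hA.total hB with hAB | hBA
  · exact hfin.eq_of_subset_of_encard_le hAB hcard.ge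
  · exact (hfin.eq_of_subset_of_encard_le' hBA hcard.le).symm

theorem isLowerSet_image_inv_of_prec {n : ℕ} {σ : Equiv.Perm (Fin n)} {A : Set (Fin n)}
    (hA : ∀ x ∈ A, ∀ y, Prec σ y x → y ∈ A) : IsLowerSet (⇑σ⁻¹ '' A) := by
  rintro _ k hk ⟨x, hx, rfl⟩
  obtain ⟨y, rfl⟩ := σ⁻¹.surjective k
  rcases hk.eq_or_lt with heq | hlt
  · exact heq ▸ Set.mem_image_of_mem _ hx
  · exact Set.mem_image_of_mem _ (hA x hx y hlt)

theorem Prec.of_not_compete {n r : ℕ} {c : Fin r → Equiv.Perm (Fin n)} {i j : Fin n}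
    {s : Fin r} (h : Prec (c s) i j) (hij : ¬ Compete c i j) (t : Fin r) : Prec (c t) i j := by
  by_contra hji
  have hne : i ≠ j := by
    rintro rfl
    exact lt_irrefl _ h
  exact hij ⟨s, t, h, (not_lt.mp hji).lt_of_ne' ((c t)⁻¹.injective.ne hne)⟩

namespace competitivityGraph

variable {n r : ℕ} {c : Fin r → Equiv.Perm (Fin n)}
  {D : (competitivityGraph c).ConnectedComponent} {x d e : Fin n} {s : Fin r}

theorem not_compete_of_notMem_of_mem (hx : x ∉ D.supp) (hd : d ∈ D.supp) : ¬ Compete c x d :=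
  fun hxd ↦ hx ((D.mem_supp_congr_adj hxd).mpr hd)

theorem prec_of_prec_of_notMem_supp (hx : x ∉ D.supp) (hd : d ∈ D.supp) (he : e ∈ D.supp)
    (h : Prec (c s) x d) (t : Fin r) : Prec (c t) x e := by
  obtain ⟨w⟩ := D.reachable_of_mem_supp hd he
  induction w generalizing s with
  | nil => exact h.of_not_compete (not_compete_of_notMem_of_mem hx hd) t
  | cons hadj _ ih =>
    have hnext := D.mem_supp_of_adj_mem_supp hd hadj
    obtain ⟨a, _, hprec, _⟩ := hadj
    have hbefore := h.of_not_compete (not_compete_of_notMem_of_mem hx hd) a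
    exact ih hnext he (lt_trans hbefore hprec)

/-- The elements that come before the whole component `D` in every ranking; they form the initial
segment below the block of `D`. For an empty family of rankings (`r = 0`) this is all of `Fin n`,
including `D`. -/
def predecessors (D : (competitivityGraph c).ConnectedComponent) : Set (Fin n) :=
  {x | ∀ t, ∀ d ∈ D.supp, Prec (c t) x d}

theorem mem_predecessors_of_prec (hx : x ∉ D.supp) (hd : d ∈ D.supp) (h : Prec (c s) x d) :
    x ∈ predecessors D :=
  fun t _ he ↦ prec_of_prec_of_notMem_supp hx hd he h t

theorem mem_predecessors_of_prec_predecessor {y : Fin n} (hx : x ∈ predecessors D)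
    (h : Prec (c s) y x) : y ∈ predecessors D := by
  obtain ⟨d, hd⟩ := D.nonempty_supp
  have hy : y ∉ D.supp := fun hy ↦ lt_asymm h (hx s y hy)
  exact mem_predecessors_of_prec hy hd (lt_trans h (hx s d hd))

theorem disjoint_predecessors_supp (D : (competitivityGraph c).ConnectedComponent) (s : Fin r) :
    Disjoint (predecessors D) D.supp :=
  Set.disjoint_left.mpr fun x hx hxD ↦ lt_irrefl _ (hx s x hxD)

theorem isLowerSet_image_inv_predecessors (D : (competitivityGraph c).ConnectedComponent)
    (s : Fin r) : IsLowerSet (⇑(c s)⁻¹ '' predecessors D) :=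
  isLowerSet_image_inv_of_prec fun _ hx _ h ↦ mem_predecessors_of_prec_predecessor hx h

theorem isLowerSet_image_inv_predecessors_union_supp
    (D : (competitivityGraph c).ConnectedComponent) (s : Fin r) :
    IsLowerSet (⇑(c s)⁻¹ '' (predecessors D ∪ D.supp)) := by
  refine isLowerSet_image_inv_of_prec ?_
  rintro x (hx | hx) y h
  · exact .inl (mem_predecessors_of_prec_predecessor hx h)
  · by_cases hy : y ∈ D.supp
    · exact .inr hy
    · exact .inl (mem_predecessors_of_prec hy hx h)

theorem image_inv_supp_eq_sdiff (D : (competitivityGraph c).ConnectedComponent) (s : Fin r) :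
    ⇑(c s)⁻¹ '' D.supp =
      ⇑(c s)⁻¹ '' (predecessors D ∪ D.supp) \ ⇑(c s)⁻¹ '' predecessors D := by
  rw [← Set.image_sdiff (c s)⁻¹.injective,
    Set.union_sdiff_cancel_left (disjoint_predecessors_supp D s).le_bot]

theorem ordConnected_image_inv_supp (D : (competitivityGraph c).ConnectedComponent) (s : Fin r) :
    (⇑(c s)⁻¹ '' D.supp).OrdConnected := by
  rw [image_inv_supp_eq_sdiff]
  exact (isLowerSet_image_inv_predecessors_union_supp D s).ordConnected.inter
    (isLowerSet_image_inv_predecessors D s).compl.ordConnected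

theorem image_inv_supp_eq_image_inv_supp (D : (competitivityGraph c).ConnectedComponent)
    (s t : Fin r) : ⇑(c s)⁻¹ '' D.supp = ⇑(c t)⁻¹ '' D.supp := by
  have image_eq {A : Set (Fin n)} (hA : ∀ u, IsLowerSet (⇑(c u)⁻¹ '' A)) :
      ⇑(c s)⁻¹ '' A = ⇑(c t)⁻¹ '' A :=
    isLowerSet_eq_of_encard_eq (hA s) (hA t) (Set.toFinite _) <| by
      rw [(c s)⁻¹.injective.encard_image, (c t)⁻¹.injective.encard_image]
  rw [image_inv_supp_eq_sdiff D s, image_inv_supp_eq_sdiff D t,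
    image_eq (isLowerSet_image_inv_predecessors D),
    image_eq (isLowerSet_image_inv_predecessors_union_supp D)]

theorem exists_image_inv_supp_eq_Icc (D : (competitivityGraph c).ConnectedComponent) (s : Fin r) :
    ∃ p q, p ≤ q ∧ ∀ t, ⇑(c t)⁻¹ '' D.supp = Set.Icc p q := by
  have hne : (⇑(c s)⁻¹ '' D.supp).Nonempty := D.nonempty_supp.image _
  have : NeZero n := ⟨by rintro rfl; exact hne.some.elim0⟩
  have hIcc := hne.ordConnected_iff_of_bdd'.mp (ordConnected_image_inv_supp D s)
  exact ⟨_, _, Set.nonempty_Icc.mp (hIcc ▸ hne),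
    fun t ↦ (image_inv_supp_eq_image_inv_supp D t s).trans hIcc⟩

end competitivityGraph

/-- Every set of eventual competitors (connected component of the competitivity graph)
is an interval of positions: `D = {x | ∃ s, p ≤ c_s⁻¹(x) ≤ q}` where `p` and `q` are
the minimum and maximum positions of the elements of `D` over all rankings. -/
theorem eventualCompetitors_interval {n r : ℕ} (hn : 1 ≤ n) (hr : 1 ≤ r)
    (c : Fin r → Equiv.Perm (Fin n))
    (D : (competitivityGraph c).ConnectedComponent) :
    ∃ p q : Fin n, p ≤ q ∧
      D.supp = {x : Fin n | ∃ s : Fin r, p ≤ (c s)⁻¹ x ∧ (c s)⁻¹ x ≤ q} ∧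
      (∀ x ∈ D.supp, ∀ s : Fin r, p ≤ (c s)⁻¹ x ∧ (c s)⁻¹ x ≤ q) ∧
      (∃ x ∈ D.supp, ∃ s : Fin r, (c s)⁻¹ x = p) ∧
      (∃ x ∈ D.supp, ∃ s : Fin r, (c s)⁻¹ x = q) := by
  let s₀ : Fin r := ⟨0, hr⟩
  obtain ⟨p, q, hpq, hIcc⟩ := competitivityGraph.exists_image_inv_supp_eq_Icc D s₀
  have mem_supp_iff (s : Fin r) (x : Fin n) : x ∈ D.supp ↔ p ≤ (c s)⁻¹ x ∧ (c s)⁻¹ x ≤ q := by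
    rw [← Set.mem_Icc, ← hIcc s, (c s)⁻¹.injective.mem_set_image]
  have exists_position_eq {k : Fin n} (hk : k ∈ Set.Icc p q) :
      ∃ x ∈ D.supp, ∃ s, (c s)⁻¹ x = k := by
    obtain ⟨x, hx, hxk⟩ := hIcc s₀ ▸ hk
    exact ⟨x, hx, s₀, hxk⟩
  refine ⟨p, q, hpq, ?_, fun x hx s ↦ (mem_supp_iff s x).mp hx,
    exists_position_eq (Set.left_mem_Icc.mpr hpq), exists_position_eq (Set.right_mem_Icc.mpr hpq)⟩
  ext x
  exact ⟨fun hx ↦ ⟨s₀, (mem_supp_iff s₀ x).mp hx⟩, fun ⟨s, hs⟩ ↦ (mem_supp_iff s x).mpr hs⟩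
end

section
/- Let R = (c_1, …, c_r) be a finite family of rankings of Fin n and let D_1 ≠ D_2 be two different sets of eventual competitors (connected components of the competitivity graph G_c(R)). Then the following are equivalent: (i) there exist a ∈ D_1, b ∈ D_2 and a ranking c_m ∈ R with a ≺_{c_m} b; (ii) for every a ∈ D_1 and every b ∈ D_2 there is a ranking c_m ∈ R with a ≺_{c_m} b. -/
/-! Elements in different components do not compete, so all rankings agree on their order. If `a`
precedes `b` in another component and `a'` competes with `a`, then some ranking has
`a' ≺ a ≺ b`, hence every ranking puts `a'` before `b`; thus `a` may be replaced by any element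
of its component. If `b` and `b'` lie in one component and `b'` preceded `a`, this would carry
over to `b` preceding `a`; so `b` may be replaced as well. -/

section

variable {V ι : Type*} (r : ι → V → V → Prop) [∀ m, Std.Irrefl (r m)]

/-- The competitivity graph of a family of strict relations on an arbitrary type, indexed by an
arbitrary type. It unfolds to `competitivityGraph c` when `r m = Prec (c m)`. -/
def competitionGraph : SimpleGraph V where
  Adj i j := ∃ s t, r s i j ∧ r t j i
  symm := ⟨fun _ _ ⟨s, t, hij, hji⟩ => ⟨t, s, hji, hij⟩⟩
  loopless := ⟨fun i ⟨s, _, hii, _⟩ => irrefl_of (r s) i hii⟩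

namespace competitionGraph

variable {r} [∀ m, Std.Trichotomous (r m)] {a a' b b' : V} {m : ι}

theorem rel_of_not_reachable (hab : ¬(competitionGraph r).Reachable a b) (h : r m a b) (s : ι) :
    r s a b := by
  rcases trichotomous_of (r s) a b with hlt | rfl | hgt
  · exact hlt
  · exact absurd .rfl hab
  · have hadj : (competitionGraph r).Adj a b := ⟨m, s, h, hgt⟩
    exact absurd hadj.reachable hab

variable [∀ m, IsTrans V (r m)]

theorem rel_of_reachable_left (haa' : (competitionGraph r).Reachable a a')
    (hab : ¬(competitionGraph r).Reachable a b) (h : r m a b) : r m a' b := by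
  obtain ⟨w⟩ := haa'
  induction w with
  | nil => exact h
  | @cons u v _ hadj _ ih =>
    have hvb : ¬(competitionGraph r).Reachable v b := fun hvb => hab (hadj.reachable.trans hvb)
    obtain ⟨_, t, -, hvu⟩ := hadj
    have hvb_t : r t v b := trans_of (r t) hvu (rel_of_not_reachable hab h t)
    exact ih hvb (rel_of_not_reachable hvb hvb_t m)

theorem rel_of_reachable_right (hbb' : (competitionGraph r).Reachable b b')
    (hab : ¬(competitionGraph r).Reachable a b) (h : r m a b) : r m a b' := by
  have hb'a : ¬(competitionGraph r).Reachable b' a := fun hb'a => hab (hbb'.trans hb'a).symm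
  rcases trichotomous_of (r m) a b' with hlt | rfl | hgt
  · exact hlt
  · exact absurd .rfl hb'a
  · have hba : r m b a := rel_of_reachable_left hbb'.symm hb'a hgt
    exact absurd hba (asymm_of (r m) h)

end competitionGraph

end

open competitionGraph in
theorem outlink_iff_all_outlinks_general {V ι : Type*} (r : ι → V → V → Prop)
    [∀ m, IsStrictTotalOrder V (r m)] (D1 D2 : (competitionGraph r).ConnectedComponent)
    (hD : D1 ≠ D2) :
    (∃ a ∈ D1.supp, ∃ b ∈ D2.supp, ∃ m, r m a b) ↔
      ∀ a ∈ D1.supp, ∀ b ∈ D2.supp, ∃ m, r m a b := by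
  have not_reachable {a b : V} (ha : a ∈ D1.supp) (hb : b ∈ D2.supp) :
      ¬(competitionGraph r).Reachable a b := fun hab =>
    hD (ha.symm.trans ((SimpleGraph.ConnectedComponent.sound hab).trans hb))
  constructor
  · rintro ⟨a, ha, b, hb, m, hab⟩ a' ha' b' hb'
    have ha'b : r m a' b :=
      rel_of_reachable_left (D1.reachable_of_mem_supp ha ha') (not_reachable ha hb) hab
    exact ⟨m, rel_of_reachable_right (D2.reachable_of_mem_supp hb hb') (not_reachable ha' hb) ha'b⟩
  · intro h
    obtain ⟨a, ha⟩ := D1.nonempty_supp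
    obtain ⟨b, hb⟩ := D2.nonempty_supp
    exact ⟨a, ha, b, hb, h a ha b hb⟩

instance Prec.isStrictTotalOrder {n : ℕ} (c : Equiv.Perm (Fin n)) :
    IsStrictTotalOrder (Fin n) (Prec c) :=
  (RelEmbedding.preimage c⁻¹.toEmbedding (· < ·)).isStrictTotalOrder

/-- For two different connected components `D_1 ≠ D_2` of the competitivity graph, the
following are equivalent: some element of `D_1` precedes some element of `D_2` in some
ranking, iff every element of `D_1` precedes every element of `D_2` in some ranking. -/
theorem outlink_iff_all_outlinks {n r : ℕ} (c : Fin r → Equiv.Perm (Fin n))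
    (D1 D2 : (competitivityGraph c).ConnectedComponent) (hD : D1 ≠ D2) :
    (∃ a ∈ D1.supp, ∃ b ∈ D2.supp, ∃ m : Fin r, Prec (c m) a b) ↔
    (∀ a ∈ D1.supp, ∀ b ∈ D2.supp, ∃ m : Fin r, Prec (c m) a b) :=
  outlink_iff_all_outlinks_general (fun m => Prec (c m)) D1 D2 hD
end

section
/- Let R = (c_1, …, c_r) be a finite family of rankings of Fin n and let D_1, D_2, D_3 be three pairwise different sets of eventual competitors (connected components of the competitivity graph G_c(R)). Write D_i → D_j when for every a ∈ D_i and every b ∈ D_j there is a ranking c_m ∈ R with a ≺_{c_m} b. If D_1 → D_2 and D_2 → D_3, then D_1 → D_3. -/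
theorem not_adj_of_mem_supp_of_ne {V : Type*} {G : SimpleGraph V} {C C' : G.ConnectedComponent}
    (hne : C ≠ C') {v w : V} (hv : v ∈ C.supp) (hw : w ∈ C'.supp) : ¬G.Adj v w := fun hvw ↦
  hne (SimpleGraph.ConnectedComponent.eq_of_common_vertex (C.mem_supp_of_adj_mem_supp hv hvw) hw)

section PositionFamily

variable {ι V β : Type*} [LinearOrder β] {pos : ι → V → β}

/-- The competitivity graph of a family of rankings, possibly with ties, of an arbitrary type.
Ranking `m` is encoded by the position `pos m i` it gives to each element `i`, in a linear order
common to all rankings; `competitivityGraph c` is the case `pos m = (c m)⁻¹`. -/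
def positionCompetitivityGraph (pos : ι → V → β) : SimpleGraph V where
  Adj i j := ∃ s t, pos s i < pos s j ∧ pos t j < pos t i
  symm := ⟨fun _ _ ⟨s, t, hs, ht⟩ ↦ ⟨t, s, ht, hs⟩⟩
  loopless := ⟨fun _ ⟨_, _, hs, _⟩ ↦ lt_irrefl _ hs⟩

/-- The relation `D → D'` between sets of eventual competitors. The ranking in which `a` comes
before `b` may depend on `a` and `b`. -/
def ComponentPrecedes (D D' : (positionCompetitivityGraph pos).ConnectedComponent) : Prop :=
  ∀ a ∈ D.supp, ∀ b ∈ D'.supp, ∃ m, pos m a < pos m b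

theorem position_le_of_not_adj {i j : V} (hij : ¬(positionCompetitivityGraph pos).Adj i j)
    {k : ι} (hk : pos k i < pos k j) (m : ι) : pos m i ≤ pos m j :=
  not_lt.mp fun hm ↦ hij ⟨k, m, hk, hm⟩

theorem ComponentPrecedes.position_le
    {D D' : (positionCompetitivityGraph pos).ConnectedComponent} (h : ComponentPrecedes D D')
    (hne : D ≠ D') {a b : V} (ha : a ∈ D.supp) (hb : b ∈ D'.supp) (m : ι) :
    pos m a ≤ pos m b := by
  obtain ⟨k, hk⟩ := h a ha b hb
  exact position_le_of_not_adj (not_adj_of_mem_supp_of_ne hne ha hb) hk m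

theorem componentOrder_transitive_general
    {D1 D2 D3 : (positionCompetitivityGraph pos).ConnectedComponent}
    (hD12 : ComponentPrecedes D1 D2) (hD23 : ComponentPrecedes D2 D3) :
    ComponentPrecedes D1 D3 := by
  rcases eq_or_ne D2 D3 with rfl | h23
  · exact hD12
  intro a ha b hb
  obtain ⟨x, hx⟩ := D2.nonempty_supp
  obtain ⟨m, hax⟩ := hD12 a ha x hx
  exact ⟨m, hax.trans_le (hD23.position_le h23 hx hb m)⟩

end PositionFamily

/-- The relation `D_i → D_j` (every element of `D_i` precedes every element of `D_j` in
some ranking) between sets of eventual competitors is transitive. -/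
theorem componentOrder_transitive {n r : ℕ} (c : Fin r → Equiv.Perm (Fin n))
    (D1 D2 D3 : (competitivityGraph c).ConnectedComponent)
    (h12 : D1 ≠ D2) (h13 : D1 ≠ D3) (h23 : D2 ≠ D3)
    (hD12 : ∀ a ∈ D1.supp, ∀ b ∈ D2.supp, ∃ m : Fin r, Prec (c m) a b)
    (hD23 : ∀ a ∈ D2.supp, ∀ b ∈ D3.supp, ∃ m : Fin r, Prec (c m) a b) :
    ∀ a ∈ D1.supp, ∀ b ∈ D3.supp, ∃ m : Fin r, Prec (c m) a b := by
  exact componentOrder_transitive_general (pos := fun m ↦ ⇑(c m)⁻¹) hD12 hD23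
end
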